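/- arXiv:1106.6214 — 6 statements merged into one kernel-verified Lean document; each statement's English description precedes it below -/
import Mathlib

section
/- Let d > 0 and let σ ∈ [0, π], δ ∈ [0, π]. If d_LR(d,σ,δ) < 2 and d_RL(d,σ,δ) ≥ 2, then δ > π/2. Moreover, if α, β are angles with 0 ≤ α ≤ π and α ≤ β ≤ 2π − α such that √((d + sin β + sin α)² + (cos β + cos α)²) < 2 and √((d − sin β − sin α)² + (cos β + cos α)²) ≥ 2, then 0 ≤ α ≤ π/2 and π + α < β < 2π − α. -/
open Real

/-- Distance between the center of the left starting disk and the right final disk,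
in `(σ, δ)` coordinates. -/
noncomputable def dLR (d σ δ : ℝ) : ℝ :=
  Real.sqrt (d ^ 2 + 4 * d * Real.cos δ * Real.sin σ + 4 * Real.cos δ ^ 2)

/-- Distance between the center of the right starting disk and the left final disk,
in `(σ, δ)` coordinates. -/
noncomputable def dRL (d σ δ : ℝ) : ℝ :=
  Real.sqrt (d ^ 2 - 4 * d * Real.cos δ * Real.sin σ + 4 * Real.cos δ ^ 2)

/-!
In the coordinates `σ = (β + α) / 2`, `δ = (β - α) / 2` one has
`d_RL ^ 2 - d_LR ^ 2 = -8 * d * cos δ * sin σ`, so `d_LR < d_RL` says exactly that `cos δ` and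
`sin σ` have opposite signs. As `sin σ ≥ 0` on `[0, π]`, this forces `cos δ < 0` and `sin σ ≠ 0`:
the first gives `δ > π / 2`, i.e. `β > π + α`, and the second `σ < π`, i.e. `β < 2 * π - α`.
-/

theorem dLR_eq_sqrt_orientations (d α β : ℝ) :
    dLR d ((β + α) / 2) ((β - α) / 2) =
      √((d + sin β + sin α) ^ 2 + (cos β + cos α) ^ 2) := by
  rw [dLR, add_assoc d, sin_add_sin, cos_add_cos]
  congr 1
  linear_combination -4 * cos ((β - α) / 2) ^ 2 * sin_sq_add_cos_sq ((β + α) / 2)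

theorem dRL_eq_sqrt_orientations (d α β : ℝ) :
    dRL d ((β + α) / 2) ((β - α) / 2) =
      √((d - sin β - sin α) ^ 2 + (cos β + cos α) ^ 2) := by
  rw [dRL, sub_sub d, sin_add_sin, cos_add_cos]
  congr 1
  linear_combination -4 * cos ((β - α) / 2) ^ 2 * sin_sq_add_cos_sq ((β + α) / 2)

section

variable {d σ δ : ℝ}

theorem dLR_lt_dRL_iff (hd : 0 < d) : dLR d σ δ < dRL d σ δ ↔ cos δ * sin σ < 0 := by
  have radicand_nonneg : 0 ≤ d ^ 2 + 4 * d * cos δ * sin σ + 4 * cos δ ^ 2 := by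
    calc 0 ≤ (d + 2 * cos δ * sin σ) ^ 2 + (2 * cos δ * cos σ) ^ 2 := by positivity
      _ = d ^ 2 + 4 * d * cos δ * sin σ + 4 * cos δ ^ 2 := by
        linear_combination 4 * cos δ ^ 2 * sin_sq_add_cos_sq σ
  rw [dLR, dRL, sqrt_lt_sqrt_iff radicand_nonneg, ← smul_neg_iff_of_pos_left hd, smul_eq_mul]
  constructor <;> intro h <;> linarith

theorem pi_div_two_lt_of_dLR_lt_dRL (hd : 0 < d) (hσ : σ ∈ Set.Icc 0 π) (hδ : 0 ≤ δ)
    (h : dLR d σ δ < dRL d σ δ) : π / 2 < δ := by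
  have cos_neg : cos δ < 0 :=
    neg_of_mul_neg_left ((dLR_lt_dRL_iff hd).1 h) (sin_nonneg_of_mem_Icc hσ)
  by_contra! hδ_le
  exact cos_neg.not_ge (cos_nonneg_of_neg_pi_div_two_le_of_le (by linarith [pi_pos]) hδ_le)

theorem ne_pi_of_dLR_lt_dRL (hd : 0 < d) (h : dLR d σ δ < dRL d σ δ) : σ ≠ π := by
  rintro rfl
  simpa using (dLR_lt_dRL_iff hd).1 h

end

theorem case_b_basics_general {d : ℝ} (hd : 0 < d) :
    (∀ σ δ : ℝ, σ ∈ Set.Icc 0 π → 0 ≤ δ → dLR d σ δ < dRL d σ δ → π / 2 < δ) ∧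
    (∀ α β : ℝ, |α| ≤ β → β ≤ 2 * π - α →
      √((d + sin β + sin α) ^ 2 + (cos β + cos α) ^ 2) <
        √((d - sin β - sin α) ^ 2 + (cos β + cos α) ^ 2) →
      α ≤ π / 2 ∧ π + α < β ∧ β < 2 * π - α) := by
  refine ⟨fun _ _ ↦ pi_div_two_lt_of_dLR_lt_dRL hd, fun α β hαβ hβ h ↦ ?_⟩
  rw [← dLR_eq_sqrt_orientations, ← dRL_eq_sqrt_orientations] at h
  obtain ⟨hα_le, hα_neg_le⟩ := abs_le'.1 hαβ
  have half_sum_mem : (β + α) / 2 ∈ Set.Icc 0 π := ⟨by linarith, by linarith⟩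
  have half_diff_gt : π / 2 < (β - α) / 2 :=
    pi_div_two_lt_of_dLR_lt_dRL hd half_sum_mem (by linarith) h
  have half_sum_lt : (β + α) / 2 < π :=
    half_sum_mem.2.lt_of_ne (ne_pi_of_dLR_lt_dRL hd h)
  exact ⟨by linarith, by linarith, by linarith⟩

/-- For `d > 0`: if `σ, δ ∈ [0, π]`, `d_LR < 2` and `d_RL ≥ 2`,
then `δ > π/2`.  Moreover, for angles `0 ≤ α ≤ π`, `α ≤ β ≤ 2π - α` with the
corresponding distance conditions, one has `0 ≤ α ≤ π/2` and `π + α < β < 2π - α`. -/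
theorem case_b_basics (d : ℝ) (hd : 0 < d) :
    (∀ σ δ : ℝ, σ ∈ Set.Icc 0 π → δ ∈ Set.Icc 0 π →
      dLR d σ δ < 2 → 2 ≤ dRL d σ δ → π / 2 < δ) ∧
    (∀ α β : ℝ, 0 ≤ α → α ≤ π → α ≤ β → β ≤ 2 * π - α →
      Real.sqrt ((d + Real.sin β + Real.sin α) ^ 2 + (Real.cos β + Real.cos α) ^ 2) < 2 →
      2 ≤ Real.sqrt ((d - Real.sin β - Real.sin α) ^ 2 + (Real.cos β + Real.cos α) ^ 2) →
      0 ≤ α ∧ α ≤ π / 2 ∧ π + α < β ∧ β < 2 * π - α) := by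
  obtain ⟨in_midpoint_coords, in_orientations⟩ := case_b_basics_general hd
  exact ⟨fun σ δ hσ hδ hLR hRL ↦ in_midpoint_coords σ δ hσ hδ.1 (hLR.trans_le hRL),
    fun α β hα _ hαβ hβ hLR hRL ↦
      ⟨hα, in_orientations α β (by rwa [abs_of_nonneg hα]) hβ (hLR.trans_le hRL)⟩⟩
end

section
/- Let 0 < d < 2 and set α* = arcsin(d/2), σ* = arcsin(d/4). Then: (i) for all σ ∈ [0, π] and all δ with α* ≤ δ ≤ π/2, one has d_RL(d,σ,δ) ≤ 2, with equality if and only if δ = α* and σ ∈ {0, π}; (ii) for all σ with σ* < σ < π − σ* and all δ with 0 ≤ δ ≤ α*, one has d_RL(d,σ,δ) < 2. -/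
open Real

/-!
Since `cos² δ = 1 - sin² δ`, we have `4 - d_RL² = 4 (sin² δ - (d/2)² + d cos δ sin σ)`. In (i) both
`sin² δ - (d/2)²` and `d cos δ sin σ` are nonnegative, and they vanish together exactly at the
corners. For (ii), `d_RL²` is a convex function of `cos δ ∈ [0, 1]`, so it lies below the chord
joining its end values `d²` and `d² - 4 d sin σ + 4`, both of which are less than `4`.
-/

theorem sin_eq_zero_iff_of_mem_Icc {θ : ℝ} (hθ : θ ∈ Set.Icc 0 π) :
    sin θ = 0 ↔ θ = 0 ∨ θ = π := by
  constructor
  · intro hsin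
    by_contra! hne
    have hθ_pos : 0 < θ := hθ.1.lt_of_ne' hne.1
    have hθ_lt : θ < π := hθ.2.lt_of_ne hne.2
    exact (sin_pos_of_pos_of_lt_pi hθ_pos hθ_lt).ne' hsin
  · rintro (rfl | rfl)
    exacts [sin_zero, sin_pi]

theorem eq_arcsin_iff_sin_eq {x θ : ℝ} (hx : x ∈ Set.Icc (-1) 1)
    (hθ : θ ∈ Set.Icc (-(π / 2)) (π / 2)) : θ = arcsin x ↔ sin θ = x :=
  ⟨fun h => h ▸ sin_arcsin hx.1 hx.2, fun h => (arcsin_eq_of_sin_eq h hθ).symm⟩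

theorem lt_sin_of_arcsin_lt_of_lt_pi_sub_arcsin {x θ : ℝ} (hleft : arcsin x < θ)
    (hright : θ < π - arcsin x) : x < sin θ := by
  have lt_sin_of_le {τ : ℝ} (hτ : arcsin x < τ) (hτ' : τ ≤ π / 2) : x < sin τ :=
    (arcsin_lt_iff_lt_sin' ⟨(neg_pi_div_two_le_arcsin x).trans_lt hτ, hτ'⟩).1 hτ
  rcases le_total θ (π / 2) with hθ | hθ
  · exact lt_sin_of_le hleft hθ
  · rw [← sin_pi_sub]
    exact lt_sin_of_le (by linarith) (by linarith)

theorem dRL_abs (d σ δ : ℝ) : dRL d σ |δ| = dRL d σ δ := by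
  simp only [dRL, cos_abs]

theorem dRL_eq_sqrt_four_sub (d σ δ : ℝ) :
    dRL d σ δ = √(4 - 4 * (sin δ ^ 2 - (d / 2) ^ 2 + d * cos δ * sin σ)) := by
  rw [dRL]
  congr 1
  linear_combination 4 * sin_sq_add_cos_sq δ

section

variable {d σ δ : ℝ}

theorem dRL_le_two_iff : dRL d σ δ ≤ 2 ↔ 0 ≤ sin δ ^ 2 - (d / 2) ^ 2 + d * cos δ * sin σ := by
  rw [dRL_eq_sqrt_four_sub, sqrt_le_left zero_le_two]
  constructor <;> intro h <;> linarith

theorem dRL_eq_two_iff : dRL d σ δ = 2 ↔ sin δ ^ 2 - (d / 2) ^ 2 + d * cos δ * sin σ = 0 := by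
  rw [dRL_eq_sqrt_four_sub, sqrt_eq_iff_mul_self_eq_of_pos zero_lt_two]
  constructor <;> intro h <;> linarith

theorem dRL_le_two_of_div_two_le_sin (hd : 0 ≤ d) (hσ : 0 ≤ sin σ) (hcos : 0 ≤ cos δ)
    (hsin : d / 2 ≤ sin δ) : dRL d σ δ ≤ 2 := by
  have hsq : (d / 2) ^ 2 ≤ sin δ ^ 2 := by gcongr
  exact dRL_le_two_iff.2 (add_nonneg (sub_nonneg.2 hsq) (by positivity))

theorem dRL_eq_two_iff_of_div_two_le_sin (hd0 : 0 < d) (hd2 : d < 2) (hσ : 0 ≤ sin σ)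
    (hcos : 0 ≤ cos δ) (hsin : d / 2 ≤ sin δ) :
    dRL d σ δ = 2 ↔ sin δ = d / 2 ∧ sin σ = 0 := by
  have hhalf : 0 ≤ d / 2 := by positivity
  have hsq : (d / 2) ^ 2 ≤ sin δ ^ 2 := by gcongr
  rw [dRL_eq_two_iff, add_eq_zero_iff_of_nonneg (sub_nonneg.2 hsq) (by positivity), sub_eq_zero,
    sq_eq_sq₀ (hhalf.trans hsin) hhalf]
  refine and_congr_right fun hsin_eq => ?_
  have hcos_ne : cos δ ≠ 0 := by
    intro hcos_eq
    have hone : (d / 2) ^ 2 = 1 := by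
      simpa [hsin_eq, hcos_eq] using sin_sq_add_cos_sq δ
    nlinarith
  rw [mul_eq_zero_iff_left (mul_ne_zero hd0.ne' hcos_ne)]

theorem dRL_lt_two_of_div_four_lt_sin (hd0 : 0 < d) (hd2 : d < 2) (hcos : 0 ≤ cos δ)
    (hσ : d / 4 < sin σ) : dRL d σ δ < 2 := by
  have hzero : d ^ 2 < 4 := by nlinarith
  have hone : d ^ 2 - 4 * d * sin σ + 4 < 4 := by nlinarith
  have hcos_le : cos δ ≤ 1 := cos_le_one δ
  have hchord : (1 - cos δ) * d ^ 2 + cos δ * (d ^ 2 - 4 * d * sin σ + 4) < 4 :=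
    convex_Iio (4 : ℝ) hzero hone (sub_nonneg.2 hcos_le) hcos (sub_add_cancel 1 _)
  have hsq_le : cos δ ^ 2 ≤ cos δ := pow_le_of_le_one hcos hcos_le two_ne_zero
  rw [dRL, sqrt_lt' zero_lt_two]
  linarith

end

theorem dRL_region_bounds_general (d : ℝ) (hd0 : 0 < d) (hd2 : d < 2) :
    (∀ σ ∈ Set.Icc (0 : ℝ) π, ∀ δ : ℝ, arcsin (d / 2) ≤ |δ| → |δ| ≤ π / 2 →
      dRL d σ δ ≤ 2 ∧ (dRL d σ δ = 2 ↔ |δ| = arcsin (d / 2) ∧ (σ = 0 ∨ σ = π))) ∧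
    (∀ σ δ : ℝ, arcsin (d / 4) < σ → σ < π - arcsin (d / 4) → |δ| ≤ π / 2 →
      dRL d σ δ < 2) := by
  have abs_mem_Icc {δ : ℝ} (hδ : |δ| ≤ π / 2) : |δ| ∈ Set.Icc (-(π / 2)) (π / 2) :=
    ⟨by linarith [abs_nonneg δ, pi_pos], hδ⟩
  constructor
  · intro σ hσ δ hδ hδ'
    have hhalf : d / 2 ∈ Set.Icc (-1) 1 := ⟨by linarith, by linarith⟩
    have hsinσ : 0 ≤ sin σ := sin_nonneg_of_mem_Icc hσ
    have hcos : 0 ≤ cos |δ| := cos_nonneg_of_mem_Icc (abs_mem_Icc hδ')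
    have hsin : d / 2 ≤ sin |δ| := (arcsin_le_iff_le_sin hhalf (abs_mem_Icc hδ')).1 hδ
    rw [← dRL_abs, ← sin_eq_zero_iff_of_mem_Icc hσ, eq_arcsin_iff_sin_eq hhalf (abs_mem_Icc hδ')]
    exact ⟨dRL_le_two_of_div_two_le_sin hd0.le hsinσ hcos hsin,
      dRL_eq_two_iff_of_div_two_le_sin hd0 hd2 hsinσ hcos hsin⟩
  · intro σ δ hσ hσ' hδ
    rw [← dRL_abs]
    exact dRL_lt_two_of_div_four_lt_sin hd0 hd2 (cos_nonneg_of_mem_Icc (abs_mem_Icc hδ))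
      (lt_sin_of_arcsin_lt_of_lt_pi_sub_arcsin hσ hσ')

/-- Let `0 < d < 2`, `α* = arcsin (d/2)`, `σ* = arcsin (d/4)`.
(i) For `σ ∈ [0, π]` and `α* ≤ δ ≤ π/2`, `d_RL ≤ 2`, with equality iff
`δ = α*` and `σ ∈ {0, π}`.  (ii) For `σ* < σ < π - σ*` and `0 ≤ δ ≤ α*`,
`d_RL < 2`. -/
theorem dRL_region_bounds (d : ℝ) (hd0 : 0 < d) (hd2 : d < 2) :
    (∀ σ ∈ Set.Icc (0:ℝ) π, ∀ δ : ℝ, Real.arcsin (d / 2) ≤ δ → δ ≤ π / 2 →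
      dRL d σ δ ≤ 2 ∧
        (dRL d σ δ = 2 ↔ δ = Real.arcsin (d / 2) ∧ (σ = 0 ∨ σ = π))) ∧
    (∀ σ δ : ℝ, Real.arcsin (d / 4) < σ → σ < π - Real.arcsin (d / 4) →
      0 ≤ δ → δ ≤ Real.arcsin (d / 2) → dRL d σ δ < 2) := by
  obtain ⟨outer, inner⟩ := dRL_region_bounds_general d hd0 hd2
  refine ⟨fun σ hσ δ hδ hδ' => ?_, fun σ δ hσ hσ' hδ hδ' => inner σ δ hσ hσ' ?_⟩
  · have habs : |δ| = δ := abs_of_nonneg ((arcsin_nonneg.2 (by positivity)).trans hδ)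
    simpa only [habs] using outer σ hσ δ (habs.symm ▸ hδ) (habs.symm ▸ hδ')
  · exact (abs_of_nonneg hδ).trans_le (hδ'.trans (arcsin_le_pi_div_two _))
end

section
/- Let 0 < d < 2 and set α* = arcsin(d/2). Then: (i) d_LR(d,σ,α*) ≥ 2 for all σ ∈ [0,π], with equality if and only if σ ∈ {0, π}; (ii) d_LR(d,σ,π/2) = d < 2 for all σ; (iii) for each σ ∈ (0, π) the map δ ↦ d_LR(d,σ,δ) is strictly decreasing on (0, π/2), and there is a unique δ_LR(σ) ∈ (α*, π/2) with d_LR(d,σ,δ_LR(σ)) = 2; moreover for δ ∈ [α*, π/2] one has d_LR(d,σ,δ) < 2 if δ > δ_LR(σ) and d_LR(d,σ,δ) > 2 if δ < δ_LR(σ). -/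
open Real

/-! Put `d = 2 sin α` with `0 < α < π/2`, so that `α* = α`. Since `(2 sin α)² + (2 cos α)² = 4`,
the radicand of `d_LR` at `δ = α*` is `4 + 4 sin (2α) sin σ`, and comparing `d_LR` with `2` there
amounts to reading off the sign of `sin σ`. For fixed `σ ∈ (0, π)`, the radicand is a strictly
increasing function of `cos δ ≥ 0`, so `d_LR` strictly decreases in `δ` from a value above `2`
at `α*` to `d < 2` at `π/2`, and the intermediate value theorem yields the unique crossing. -/

open Set

section IntermediateValue

variable {X Y : Type*} [ConditionallyCompleteLinearOrder X] [TopologicalSpace X] [OrderTopology X]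
  [DenselyOrdered X] [LinearOrder Y] [TopologicalSpace Y] [OrderClosedTopology Y]

theorem exists_mem_Ioo_eq_of_strictAntiOn_of_continuousOn {f : X → Y} {a b : X} {y : Y}
    (hab : a ≤ b) (hanti : StrictAntiOn f (Icc a b)) (hcont : ContinuousOn f (Icc a b))
    (hy : y ∈ Ioo (f b) (f a)) :
    ∃ c ∈ Ioo a b, f c = y ∧ (∀ x ∈ Ioo a b, f x = y → x = c) ∧
      ∀ x ∈ Icc a b, (c < x → f x < y) ∧ (x < c → y < f x) := by
  obtain ⟨c, hc, rfl⟩ := intermediate_value_Ioo' hab hcont hy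
  have hc' : c ∈ Icc a b := Ioo_subset_Icc_self hc
  exact ⟨c, hc, rfl, fun x hx hxc => hanti.injOn (Ioo_subset_Icc_self hx) hc' hxc,
    fun x hx => ⟨fun hcx => hanti hc' hx hcx, fun hxc => hanti hx hc' hxc⟩⟩

end IntermediateValue

theorem sin_eq_zero_iff_of_mem_Icc_zero_pi {x : ℝ} (hx : x ∈ Icc 0 π) :
    sin x = 0 ↔ x = 0 ∨ x = π := by
  refine ⟨fun hsin => ?_, ?_⟩
  · by_contra! hne
    exact (sin_pos_of_mem_Ioo ⟨hx.1.lt_of_ne' hne.1, hx.2.lt_of_ne hne.2⟩).ne' hsin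
  · rintro (rfl | rfl)
    exacts [sin_zero, sin_pi]

theorem exists_mem_Ioo_two_mul_sin_eq {d : ℝ} (hd0 : 0 < d) (hd2 : d < 2) :
    ∃ α ∈ Ioo 0 (π / 2), 2 * sin α = d := by
  refine ⟨arcsin (d / 2), ⟨arcsin_pos.2 (by linarith), arcsin_lt_pi_div_two.2 (by linarith)⟩, ?_⟩
  rw [sin_arcsin (by linarith) (by linarith)]
  ring

theorem continuous_dLR (d σ : ℝ) : Continuous (dLR d σ) := by
  unfold dLR
  fun_prop

theorem dLR_pi_div_two (d σ : ℝ) : dLR d σ (π / 2) = |d| := by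
  simp [dLR, sqrt_sq_eq_abs]

theorem strictAntiOn_dLR {d σ : ℝ} (h : 0 ≤ d * sin σ) :
    StrictAntiOn (dLR d σ) (Icc 0 (π / 2)) := by
  intro x hx y hy hxy
  have hcos : cos y < cos x := cos_lt_cos_of_nonneg_of_le_pi_div_two hx.1 hy.2 hxy
  have hcos_nonneg : 0 ≤ cos y := cos_nonneg_of_mem_Icc ⟨by linarith [pi_pos, hy.1], hy.2⟩
  have hlinear : d * sin σ * cos y ≤ d * sin σ * cos x := by gcongr
  have hsq : cos y ^ 2 < cos x ^ 2 := by gcongr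
  have hlinear_nonneg : 0 ≤ d * sin σ * cos y := mul_nonneg h hcos_nonneg
  apply sqrt_lt_sqrt
  · linarith [sq_nonneg d, sq_nonneg (cos y)]
  · linarith

theorem dLR_two_mul_sin (α σ : ℝ) :
    dLR (2 * sin α) σ α = √(2 ^ 2 + 4 * (sin (2 * α) * sin σ)) := by
  rw [dLR, sin_two_mul]
  congr 1
  linear_combination 4 * sin_sq_add_cos_sq α

section AtTwoMulSin

variable {α σ : ℝ}

theorem two_le_dLR_two_mul_sin_iff (hα : 0 < sin (2 * α)) :
    2 ≤ dLR (2 * sin α) σ α ↔ 0 ≤ sin σ := by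
  rw [dLR_two_mul_sin, le_sqrt' two_pos, le_add_iff_nonneg_right,
    mul_nonneg_iff_of_pos_left four_pos, mul_nonneg_iff_of_pos_left hα]

theorem two_lt_dLR_two_mul_sin_iff (hα : 0 < sin (2 * α)) :
    2 < dLR (2 * sin α) σ α ↔ 0 < sin σ := by
  rw [dLR_two_mul_sin, lt_sqrt two_pos.le, lt_add_iff_pos_right,
    mul_pos_iff_of_pos_left four_pos, mul_pos_iff_of_pos_left hα]

theorem dLR_two_mul_sin_eq_two_iff (hα : sin (2 * α) ≠ 0) :
    dLR (2 * sin α) σ α = 2 ↔ sin σ = 0 := by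
  rw [dLR_two_mul_sin, sqrt_eq_iff_mul_self_eq_of_pos two_pos, ← sq, left_eq_add,
    mul_eq_zero_iff_left four_ne_zero, mul_eq_zero_iff_left hα]

end AtTwoMulSin

/-- Let `0 < d < 2` and `α* = arcsin (d/2)`.
(i) `d_LR(d, σ, α*) ≥ 2` for `σ ∈ [0, π]`, with equality iff `σ ∈ {0, π}`;
(ii) `d_LR(d, σ, π/2) = d < 2` for all `σ`;
(iii) for each `σ ∈ (0, π)`, `δ ↦ d_LR(d, σ, δ)` is strictly decreasing on
`(0, π/2)` and there is a unique `δ₀ ∈ (α*, π/2)` with `d_LR(d, σ, δ₀) = 2`;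
moreover for `δ ∈ [α*, π/2]`, `d_LR < 2` if `δ > δ₀` and `d_LR > 2` if `δ < δ₀`. -/
theorem dLR_boundary_curve (d : ℝ) (hd0 : 0 < d) (hd2 : d < 2) :
    (∀ σ ∈ Set.Icc (0:ℝ) π,
      2 ≤ dLR d σ (Real.arcsin (d / 2)) ∧
        (dLR d σ (Real.arcsin (d / 2)) = 2 ↔ σ = 0 ∨ σ = π)) ∧
    (∀ σ : ℝ, dLR d σ (π / 2) = d ∧ d < 2) ∧
    (∀ σ ∈ Set.Ioo (0:ℝ) π,
      StrictAntiOn (fun δ => dLR d σ δ) (Set.Ioo 0 (π / 2)) ∧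
      ∃ δ₀ ∈ Set.Ioo (Real.arcsin (d / 2)) (π / 2),
        dLR d σ δ₀ = 2 ∧
        (∀ δ ∈ Set.Ioo (Real.arcsin (d / 2)) (π / 2), dLR d σ δ = 2 → δ = δ₀) ∧
        (∀ δ ∈ Set.Icc (Real.arcsin (d / 2)) (π / 2),
          (δ₀ < δ → dLR d σ δ < 2) ∧ (δ < δ₀ → 2 < dLR d σ δ))) := by
  obtain ⟨α, ⟨hα0, hα⟩, rfl⟩ := exists_mem_Ioo_two_mul_sin_eq hd0 hd2
  have harcsin : arcsin (2 * sin α / 2) = α := by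
    rw [mul_div_cancel_left₀ _ two_ne_zero, arcsin_sin (by linarith) hα.le]
  have hsin : 0 < sin (2 * α) := sin_pos_of_mem_Ioo ⟨by linarith, by linarith⟩
  have hpi (σ : ℝ) : dLR (2 * sin α) σ (π / 2) = 2 * sin α := by
    rw [dLR_pi_div_two, abs_of_pos hd0]
  rw [harcsin]
  refine ⟨fun σ hσ => ?_, fun σ => ⟨hpi σ, hd2⟩, fun σ hσ => ?_⟩
  · exact ⟨(two_le_dLR_two_mul_sin_iff hsin).2 (sin_nonneg_of_mem_Icc hσ),
      (dLR_two_mul_sin_eq_two_iff hsin.ne').trans (sin_eq_zero_iff_of_mem_Icc_zero_pi hσ)⟩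
  · have hσ_pos : 0 < sin σ := sin_pos_of_mem_Ioo hσ
    have hanti := strictAntiOn_dLR (mul_pos hd0 hσ_pos).le
    exact ⟨hanti.mono Ioo_subset_Icc_self,
      exists_mem_Ioo_eq_of_strictAntiOn_of_continuousOn hα.le
        (hanti.mono (Icc_subset_Icc_left hα0.le)) (continuous_dLR _ σ).continuousOn
        ⟨(hpi σ).trans_lt hd2, (two_lt_dLR_two_mul_sin_iff hsin).2 hσ_pos⟩⟩
end

section
/- Let 0 < d < 2 and set α* = arcsin(d/2). For angles α, β set D_LR(α,β) = √((d + sin β + sin α)² + (cos β + cos α)²) and D_RL(α,β) = √((d − sin β − sin α)² + (cos β + cos α)²). Then for each α ∈ [0, α*) there exist unique values β_RL(α) and β_LR(α) in the interval (α + π, 2π − α) such that D_RL(α, β_RL(α)) = 2 and D_LR(α, β_LR(α)) = 2; these satisfy α + π < β_RL(α) < 2π − α* < β_LR(α) < 2π − α; for β ∈ [α + π, 2π − α] one has D_RL(α,β) < 2 iff β < β_RL(α) and D_LR(α,β) < 2 iff β < β_LR(α); the function β_LR is monotonically decreasing on [0, α*); and D_LR(α*, 2π − α*) = D_RL(α*,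 2π − α*) = 2. -/
open Real

/-- Distance between the centers `ℓ_S = (-sin α, cos α)` and
`r_F = (d + sin β, -cos β)`. -/
noncomputable def DLR (d α β : ℝ) : ℝ :=
  Real.sqrt ((d + Real.sin β + Real.sin α) ^ 2 + (Real.cos β + Real.cos α) ^ 2)

/-- Distance between the centers `r_S = (sin α, -cos α)` and
`ℓ_F = (d - sin β, cos β)`. -/
noncomputable def DRL (d α β : ℝ) : ℝ :=
  Real.sqrt ((d - Real.sin β - Real.sin α) ^ 2 + (Real.cos β + Real.cos α) ^ 2)

/-!
Fix `α`. As a function of `β`, the square of `D_LR` is a trigonometric polynomial of degree one, and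
`D_RL` is `D_LR` with `d` replaced by `-d`. Values of such a polynomial at four points of one period
satisfy a linear relation with alternating signs, so a polynomial which lies below a level at the
left end of an interval shorter than `2π`, and above it at the right end, crosses the level exactly
once. At the ends of `[α + π, 2π - α]` the squared distances are `d²` and `d² + 4 cos² α`, which
gives `β_RL` and `β_LR`; the sign at `2π - α*` locates them.

Because `D_LR` is symmetric in `α` and `β`, applying the same single crossing to `β - 2π` in place
of `α` shows that `α ↦ D_LR(α, β)` crosses the level `2` upwards, so `β_LR` is decreasing.
-/

section Upcrossing

variable {X Y : Type*} [LinearOrder X] [LinearOrder Y]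

/-- `z` is the only point of `[a, b]` at which `f` crosses the level `c`, and it does so upwards:
`f x` compares to `c` as `x` compares to `z`. -/
structure IsUpcrossing (f : X → Y) (c : Y) (a b z : X) : Prop where
  mem_Ioo : z ∈ Set.Ioo a b
  cmp_eq : ∀ x ∈ Set.Icc a b, cmp (f x) c = cmp x z

namespace IsUpcrossing

variable {f : X → Y} {c : Y} {a b z x : X}

lemma lt_level_iff (h : IsUpcrossing f c a b z) (hx : x ∈ Set.Icc a b) : f x < c ↔ x < z :=
  lt_iff_lt_of_cmp_eq_cmp (h.cmp_eq x hx)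

lemma eq_level_iff (h : IsUpcrossing f c a b z) (hx : x ∈ Set.Icc a b) : f x = c ↔ x = z :=
  eq_iff_eq_of_cmp_eq_cmp (h.cmp_eq x hx)

lemma level_lt_iff (h : IsUpcrossing f c a b z) (hx : x ∈ Set.Icc a b) : c < f x ↔ z < x :=
  lt_iff_lt_of_cmp_eq_cmp (cmp_eq_cmp_symm.1 (h.cmp_eq x hx))

lemma apply_eq_level (h : IsUpcrossing f c a b z) : f z = c :=
  (h.eq_level_iff (Set.Ioo_subset_Icc_self h.mem_Ioo)).2 rfl

end IsUpcrossing

end Upcrossing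

lemma exists_isUpcrossing {X Y : Type*} [ConditionallyCompleteLinearOrder X] [TopologicalSpace X]
    [OrderTopology X] [DenselyOrdered X] [LinearOrder Y] [TopologicalSpace Y]
    [OrderClosedTopology Y] {f : X → Y} {c : Y} {a b : X} (hab : a ≤ b)
    (hf : ContinuousOn f (Set.Icc a b)) (ha : f a < c) (hb : c < f b)
    (stays_above : ∀ x y, a < x → x < y → y < b → c ≤ f x → c < f y) :
    ∃ z, IsUpcrossing f c a b z := by
  obtain ⟨z, ⟨haz, hzb⟩, rfl⟩ := intermediate_value_Ioo hab hf ⟨ha, hb⟩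
  refine ⟨z, ⟨haz, hzb⟩, fun x ⟨hax, hxb⟩ => ?_⟩
  rcases lt_trichotomy x z with hxz | rfl | hzx
  · have below : f x < f z := by
      rcases hax.eq_or_lt with rfl | hax
      · exact ha
      · exact lt_of_not_ge fun h => (stays_above x z hax hxz hzb h).false
    rw [below.cmp_eq_lt, hxz.cmp_eq_lt]
  · rw [cmp_self_eq_eq, cmp_self_eq_eq]
  · have above : f z < f x := by
      rcases hxb.eq_or_lt with rfl | hxb
      · exact hb
      · exact stays_above z x haz hzx hxb le_rfl
    rw [above.cmp_eq_gt, hzx.cmp_eq_gt]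

/-- The real trigonometric polynomial of degree at most one with coefficients `k`, `A`, `B`. -/
noncomputable def trigPoly (k A B x : ℝ) : ℝ :=
  k + A * cos x + B * sin x

-- In half angles a `trigPoly` is a binary quadratic form, so this is the linear dependence between
-- the values of such a form at four points.
lemma trigPoly_four_points (k A B w x y z : ℝ) :
    trigPoly k A B w * (sin ((y - x) / 2) * sin ((z - x) / 2) * sin ((z - y) / 2)) +
        trigPoly k A B y * (sin ((x - w) / 2) * sin ((z - w) / 2) * sin ((z - x) / 2)) =
      trigPoly k A B x * (sin ((y - w) / 2) * sin ((z - w) / 2) * sin ((z - y) / 2)) +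
        trigPoly k A B z * (sin ((x - w) / 2) * sin ((y - w) / 2) * sin ((y - x) / 2)) := by
  have half_angles (t : ℝ) : trigPoly k A B t =
      k * (cos (t / 2) ^ 2 + sin (t / 2) ^ 2) + A * (cos (t / 2) ^ 2 - sin (t / 2) ^ 2) +
        B * (2 * sin (t / 2) * cos (t / 2)) := by
    rw [← cos_two_mul', ← sin_two_mul, cos_sq_add_sin_sq, mul_div_cancel₀ t two_ne_zero, mul_one,
      trigPoly]
  simp only [half_angles, sub_div, sin_sub]
  ring

lemma exists_isUpcrossing_trigPoly {k A B c a b : ℝ} (hab : a ≤ b) (hba : b < a + 2 * π)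
    (ha : trigPoly k A B a < c) (hb : c < trigPoly k A B b) :
    ∃ z, IsUpcrossing (trigPoly k A B) c a b z := by
  refine exists_isUpcrossing hab (by unfold trigPoly; fun_prop) ha hb fun x y hax hxy hyb hx => ?_
  by_contra! hy
  have sin_half_pos {s t : ℝ} (has : a ≤ s) (hst : s < t) (htb : t ≤ b) : 0 < sin ((t - s) / 2) :=
    sin_pos_of_pos_of_lt_pi (by linarith) (by linarith)
  have hax' := sin_half_pos le_rfl hax (hxy.trans hyb).le
  have hay' := sin_half_pos le_rfl (hax.trans hxy) hyb.le
  have hab' := sin_half_pos le_rfl (hax.trans (hxy.trans hyb)) le_rfl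
  have hxy' := sin_half_pos hax.le hxy hyb.le
  have hxb' := sin_half_pos hax.le (hxy.trans hyb) le_rfl
  have hyb' := sin_half_pos (hax.trans hxy).le hyb le_rfl
  have shift (t : ℝ) : trigPoly (k - c) A B t = trigPoly k A B t - c := by unfold trigPoly; ring
  have relation := trigPoly_four_points (k - c) A B a x y b
  simp only [shift] at relation
  have left_neg := mul_neg_of_neg_of_pos (sub_neg.2 ha) (mul_pos (mul_pos hxy' hxb') hyb')
  have left_nonpos :=
    mul_nonpos_of_nonpos_of_nonneg (sub_nonpos.2 hy) (mul_pos (mul_pos hax' hab') hxb').le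
  have right_nonneg := mul_nonneg (sub_nonneg.2 hx) (mul_pos (mul_pos hay' hab') hyb').le
  have right_pos := mul_pos (sub_pos.2 hb) (mul_pos (mul_pos hax' hay') hxy')
  linarith

section Distances

variable (d α β : ℝ)

lemma DRL_eq_DLR_neg : DRL d α β = DLR (-d) α β := by
  unfold DRL DLR
  congr 1
  ring

lemma DLR_comm : DLR d α β = DLR d β α := by
  unfold DLR
  congr 1
  ring

lemma DLR_sub_two_pi_add_two_pi : DLR d (α - 2 * π) (β + 2 * π) = DLR d α β := by
  simp only [DLR, sin_sub_two_pi, cos_sub_two_pi, sin_add_two_pi, cos_add_two_pi]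

lemma cmp_DLR_two : cmp (DLR d α β) 2 =
    cmp (trigPoly ((d + sin α) ^ 2 + cos α ^ 2 + 1) (2 * cos α) (2 * (d + sin α)) β) (2 ^ 2) := by
  have sq_DLR : DLR d α β ^ 2 =
      trigPoly ((d + sin α) ^ 2 + cos α ^ 2 + 1) (2 * cos α) (2 * (d + sin α)) β := by
    rw [DLR, sq_sqrt (by positivity), trigPoly]
    linear_combination sin_sq_add_cos_sq β
  rw [← sq_DLR]
  exact ((pow_left_strictMonoOn₀ two_ne_zero).cmp_map_eq (sqrt_nonneg _)
    (zero_le_two (α := ℝ))).symm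

end Distances

lemma exists_isUpcrossing_DLR {d α : ℝ} (hα : α ∈ Set.Ioo (-(π / 2)) (π / 2))
    (hsin : (2 * sin α) ^ 2 < d ^ 2) (hd : d ^ 2 < 2 ^ 2) :
    ∃ β, IsUpcrossing (DLR d α) 2 (α + π) (2 * π - α) β := by
  obtain ⟨hα₁, hα₂⟩ := hα
  obtain ⟨β, hβ, hcmp⟩ := exists_isUpcrossing_trigPoly
    (k := (d + sin α) ^ 2 + cos α ^ 2 + 1) (A := 2 * cos α) (B := 2 * (d + sin α)) (c := 2 ^ 2)
    (a := α + π) (b := 2 * π - α) (by linarith) (by linarith)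
    (by
      rw [trigPoly, cos_add_pi, sin_add_pi]
      linarith [sin_sq_add_cos_sq α])
    (by
      rw [trigPoly, cos_two_pi_sub, sin_two_pi_sub]
      linarith [sin_sq_add_cos_sq α])
  exact ⟨β, hβ, fun x hx => (cmp_DLR_two d α x).trans (hcmp x hx)⟩

section CriticalAngle

-- `s` plays the role of `α*`, so that `d = 2 sin s`.
variable {s α : ℝ}

lemma sq_two_mul_sin_lt (hs : s ≤ π / 2) (hα : α ∈ Set.Ioo (-s) s) :
    (2 * sin α) ^ 2 < (2 * sin s) ^ 2 := by
  obtain ⟨hα₁, hα₂⟩ := hα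
  have lower : sin (-s) < sin α := sin_lt_sin_of_lt_of_le_pi_div_two (by linarith) (by linarith) hα₁
  have upper : sin α < sin s := sin_lt_sin_of_lt_of_le_pi_div_two (by linarith) hs hα₂
  rw [sin_neg] at lower
  exact sq_lt_sq' (by linarith) (by linarith)

lemma sq_two_mul_sin_lt_two_sq (hs : s ∈ Set.Ioo (-(π / 2)) (π / 2)) :
    (2 * sin s) ^ 2 < 2 ^ 2 := by
  simpa using sq_two_mul_sin_lt le_rfl hs

lemma exists_isUpcrossing_DLR_two_mul_sin (hs : s < π / 2) (hα : α ∈ Set.Ioo (-s) s) :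
    ∃ β, IsUpcrossing (DLR (2 * sin s) α) 2 (α + π) (2 * π - α) β :=
  exists_isUpcrossing_DLR ⟨by linarith [hα.1], by linarith [hα.2]⟩ (sq_two_mul_sin_lt hs.le hα)
    (sq_two_mul_sin_lt_two_sq ⟨by linarith [hα.1, hα.2], hs⟩)

lemma exists_isUpcrossing_DRL_two_mul_sin (hs : s < π / 2) (hα : α ∈ Set.Ioo (-s) s) :
    ∃ β, IsUpcrossing (DRL (2 * sin s) α) 2 (α + π) (2 * π - α) β := by
  rw [funext (DRL_eq_DLR_neg (2 * sin s) α)]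
  apply exists_isUpcrossing_DLR ⟨by linarith [hα.1], by linarith [hα.2]⟩ <;> rw [neg_sq]
  · exact sq_two_mul_sin_lt hs.le hα
  · exact sq_two_mul_sin_lt_two_sq ⟨by linarith [hα.1, hα.2], hs⟩

lemma DLR_lt_two_at_critical (hs : s < π / 2) (hα : α ∈ Set.Ioo (-s) s) :
    DLR (2 * sin s) α (2 * π - s) < 2 := by
  obtain ⟨hα₁, hα₂⟩ := hα
  have cos_lt : cos (s - α) < 1 := by
    rw [← cos_zero]
    exact cos_lt_cos_of_nonneg_of_le_pi le_rfl (by linarith) (by linarith)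
  have sq_eq : (2 * sin s + sin (2 * π - s) + sin α) ^ 2 + (cos (2 * π - s) + cos α) ^ 2 =
      2 + 2 * cos (s - α) := by
    rw [sin_two_pi_sub, cos_two_pi_sub, cos_sub]
    linear_combination sin_sq_add_cos_sq s + sin_sq_add_cos_sq α
  rw [DLR, sq_eq, sqrt_lt' two_pos]
  linarith

lemma two_lt_DRL_at_critical (hs : s < π / 2) (hα : α ∈ Set.Ioo (-s) s) :
    2 < DRL (2 * sin s) α (2 * π - s) := by
  obtain ⟨hα₁, hα₂⟩ := hα
  have sin_s_pos : 0 < sin s := sin_pos_of_pos_of_lt_pi (by linarith) (by linarith)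
  have cos_s_pos : 0 < cos s := cos_pos_of_mem_Ioo ⟨by linarith, hs⟩
  have sin_lt : sin α < sin s := sin_lt_sin_of_lt_of_le_pi_div_two (by linarith) hs.le hα₂
  have cos_lt : cos s < cos α := by
    rw [← cos_abs α]
    exact cos_lt_cos_of_nonneg_of_le_pi (abs_nonneg α) (by linarith) (abs_lt.2 ⟨hα₁, hα₂⟩)
  have sq_eq : (2 * sin s - sin (2 * π - s) - sin α) ^ 2 + (cos (2 * π - s) + cos α) ^ 2 =
      2 ^ 2 + (2 * (cos s * (cos α - cos s)) + 6 * (sin s * (sin s - sin α))) := by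
    rw [sin_two_pi_sub, cos_two_pi_sub]
    linear_combination 3 * sin_sq_add_cos_sq s + sin_sq_add_cos_sq α
  rw [DRL, sq_eq, lt_sqrt zero_le_two]
  linarith [mul_pos cos_s_pos (sub_pos.2 cos_lt), mul_pos sin_s_pos (sub_pos.2 sin_lt)]

lemma DLR_critical_eq_two (s : ℝ) : DLR (2 * sin s) s (2 * π - s) = 2 := by
  rw [DLR, sqrt_eq_iff_mul_self_eq_of_pos two_pos, sin_two_pi_sub, cos_two_pi_sub]
  linear_combination -4 * sin_sq_add_cos_sq s

lemma DRL_critical_eq_two (s : ℝ) : DRL (2 * sin s) s (2 * π - s) = 2 := by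
  rw [DRL, sqrt_eq_iff_mul_self_eq_of_pos two_pos, sin_two_pi_sub, cos_two_pi_sub]
  linear_combination -4 * sin_sq_add_cos_sq s

lemma two_pi_sub_mem_Icc (hs : s < π / 2) (hα : α < s) :
    2 * π - s ∈ Set.Icc (α + π) (2 * π - α) :=
  ⟨by linarith, by linarith⟩

lemma critical_lt_of_isUpcrossing_DLR {β : ℝ} (hs : s < π / 2) (hα : α ∈ Set.Ioo (-s) s)
    (h : IsUpcrossing (DLR (2 * sin s) α) 2 (α + π) (2 * π - α) β) : 2 * π - s < β :=
  (h.lt_level_iff (two_pi_sub_mem_Icc hs hα.2)).1 (DLR_lt_two_at_critical hs hα)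

lemma lt_critical_of_isUpcrossing_DRL {β : ℝ} (hs : s < π / 2) (hα : α ∈ Set.Ioo (-s) s)
    (h : IsUpcrossing (DRL (2 * sin s) α) 2 (α + π) (2 * π - α) β) : β < 2 * π - s :=
  (h.level_lt_iff (two_pi_sub_mem_Icc hs hα.2)).1 (two_lt_DRL_at_critical hs hα)

lemma two_lt_DLR_of_lt {α' β : ℝ} (hs : s < π / 2) (hα : -s < α) (hαα' : α < α')
    (hβ : β ∈ Set.Ioc (2 * π - s) (2 * π - α')) (h : DLR (2 * sin s) α β = 2) :
    2 < DLR (2 * sin s) α' β := by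
  obtain ⟨hβ₁, hβ₂⟩ := hβ
  have swap (γ : ℝ) : DLR (2 * sin s) (β - 2 * π) (γ + 2 * π) = DLR (2 * sin s) γ β := by
    rw [DLR_sub_two_pi_add_two_pi, DLR_comm]
  obtain ⟨z, hz⟩ := exists_isUpcrossing_DLR_two_mul_sin (α := β - 2 * π) hs
    ⟨by linarith, by linarith⟩
  have z_eq : α + 2 * π = z :=
    (hz.eq_level_iff ⟨by linarith, by linarith⟩).1 ((swap α).trans h)
  rw [← swap, hz.level_lt_iff ⟨by linarith, by linarith⟩]
  linarith

lemma strictAntiOn_of_isUpcrossing_DLR {b : ℝ → ℝ} (hs : s < π / 2)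
    (h : ∀ α ∈ Set.Ioo (-s) s, IsUpcrossing (DLR (2 * sin s) α) 2 (α + π) (2 * π - α) (b α)) :
    StrictAntiOn b (Set.Ioo (-s) s) := by
  intro α hα α' hα' hαα'
  rcases lt_or_ge (2 * π - α') (b α) with hlt | hle
  · exact (h α' hα').mem_Ioo.2.trans hlt
  · have critical_lt := critical_lt_of_isUpcrossing_DLR hs hα (h α hα)
    have hmem : b α ∈ Set.Icc (α' + π) (2 * π - α') := ⟨by linarith [hα'.2], hle⟩
    exact ((h α' hα').level_lt_iff hmem).1
      (two_lt_DLR_of_lt hs hα.1 hαα' ⟨critical_lt, hle⟩ (h α hα).apply_eq_level)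

end CriticalAngle

theorem case_b_alpha_monotone_general (d : ℝ) (hd0 : 0 < d) (hd2 : d < 2) :
    ∃ βRL βLR : ℝ → ℝ,
      (∀ α ∈ Set.Ioo (-arcsin (d / 2)) (arcsin (d / 2)),
        (α + π < βRL α ∧ βRL α < 2 * π - arcsin (d / 2)) ∧
        (2 * π - arcsin (d / 2) < βLR α ∧ βLR α < 2 * π - α) ∧
        DRL d α (βRL α) = 2 ∧ DLR d α (βLR α) = 2 ∧
        (∀ β ∈ Set.Ioo (α + π) (2 * π - α), DRL d α β = 2 → β = βRL α) ∧
        (∀ β ∈ Set.Ioo (α + π) (2 * π - α), DLR d α β = 2 → β = βLR α) ∧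
        (∀ β ∈ Set.Icc (α + π) (2 * π - α), (DRL d α β < 2 ↔ β < βRL α)) ∧
        (∀ β ∈ Set.Icc (α + π) (2 * π - α), (DLR d α β < 2 ↔ β < βLR α))) ∧
      StrictAntiOn βLR (Set.Ioo (-arcsin (d / 2)) (arcsin (d / 2))) ∧
      DLR d (arcsin (d / 2)) (2 * π - arcsin (d / 2)) = 2 ∧
      DRL d (arcsin (d / 2)) (2 * π - arcsin (d / 2)) = 2 := by
  have d_eq : d = 2 * sin (arcsin (d / 2)) := by
    rw [sin_arcsin (by linarith) (by linarith)]
    ring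
  have hs : arcsin (d / 2) < π / 2 := arcsin_lt_pi_div_two.2 (by linarith)
  generalize arcsin (d / 2) = s at d_eq hs ⊢
  subst d_eq
  choose! βRL hRL using fun α hα => exists_isUpcrossing_DRL_two_mul_sin (α := α) hs hα
  choose! βLR hLR using fun α hα => exists_isUpcrossing_DLR_two_mul_sin (α := α) hs hα
  refine ⟨βRL, βLR, fun α hα => ?_, strictAntiOn_of_isUpcrossing_DLR hs hLR,
    DLR_critical_eq_two s, DRL_critical_eq_two s⟩
  specialize hRL α hα
  specialize hLR α hα
  exact ⟨⟨hRL.mem_Ioo.1, lt_critical_of_isUpcrossing_DRL hs hα hRL⟩,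
    ⟨critical_lt_of_isUpcrossing_DLR hs hα hLR, hLR.mem_Ioo.2⟩,
    hRL.apply_eq_level, hLR.apply_eq_level,
    fun _ hβ => (hRL.eq_level_iff (Set.Ioo_subset_Icc_self hβ)).1,
    fun _ hβ => (hLR.eq_level_iff (Set.Ioo_subset_Icc_self hβ)).1,
    fun _ => hRL.lt_level_iff, fun _ => hLR.lt_level_iff⟩

/-- Let `0 < d < 2`, `α* = arcsin (d/2)`.  For each `α ∈ [0, α*)`
there are unique values `β_RL α` and `β_LR α` in `(α + π, 2π - α)` where
`D_RL`, resp. `D_LR`, equals `2`; they satisfy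
`α + π < β_RL α < 2π - α* < β_LR α < 2π - α`; for `β ∈ [α + π, 2π - α]` one has
`D_RL < 2` iff `β < β_RL α` and `D_LR < 2` iff `β < β_LR α`; the function `β_LR`
is monotonically decreasing on `[0, α*)`; and
`D_LR(α*, 2π - α*) = D_RL(α*, 2π - α*) = 2`. -/
theorem case_b_alpha_monotone (d : ℝ) (hd0 : 0 < d) (hd2 : d < 2) :
    ∃ βRL βLR : ℝ → ℝ,
      (∀ α ∈ Set.Ico (0:ℝ) (Real.arcsin (d / 2)),
        (α + π < βRL α ∧ βRL α < 2 * π - Real.arcsin (d / 2)) ∧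
        (2 * π - Real.arcsin (d / 2) < βLR α ∧ βLR α < 2 * π - α) ∧
        DRL d α (βRL α) = 2 ∧ DLR d α (βLR α) = 2 ∧
        (∀ β ∈ Set.Ioo (α + π) (2 * π - α), DRL d α β = 2 → β = βRL α) ∧
        (∀ β ∈ Set.Ioo (α + π) (2 * π - α), DLR d α β = 2 → β = βLR α) ∧
        (∀ β ∈ Set.Icc (α + π) (2 * π - α), (DRL d α β < 2 ↔ β < βRL α)) ∧
        (∀ β ∈ Set.Icc (α + π) (2 * π - α), (DLR d α β < 2 ↔ β < βLR α))) ∧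
      AntitoneOn βLR (Set.Ico 0 (Real.arcsin (d / 2))) ∧
      DLR d (Real.arcsin (d / 2)) (2 * π - Real.arcsin (d / 2)) = 2 ∧
      DRL d (Real.arcsin (d / 2)) (2 * π - Real.arcsin (d / 2)) = 2 := by
  obtain ⟨βRL, βLR, hβ, hanti, hcorner⟩ := case_b_alpha_monotone_general d hd0 hd2
  have hsub : Set.Ico 0 (arcsin (d / 2)) ⊆ Set.Ioo (-arcsin (d / 2)) (arcsin (d / 2)) :=
    fun α hα => ⟨by linarith [hα.1, hα.2], hα.2⟩
  exact ⟨βRL, βLR, fun α hα => hβ α (hsub hα), hanti.antitoneOn.mono hsub, hcorner⟩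
end

section
/- Let 0 < d < 2 and set α* = arcsin(d/2), and define on the rectangle Ξ = [0,π] × [α*, π−α*] the functions L(d,σ,δ) = 2π − 4·arcsin(d_L(d,σ,δ)/4) + 2δ and R(d,σ,δ) = 4π − 4·arcsin(d_R(d,σ,δ)/4) − 2δ. Then for each fixed δ ∈ [α*, π−α*], the function σ ↦ L(d,σ,δ) is strictly decreasing on [0,π] and σ ↦ R(d,σ,δ) is strictly increasing on [0,π]; and for each fixed σ ∈ [0,π], the function δ ↦ L(d,σ,δ) is strictly increasing on [α*, π−α*] and δ ↦ R(d,σ,δ) is strictly decreasing on [α*, π−α*]. -/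
open Real

/-- Distance between the centers of the two left disks, in `(σ, δ)` coordinates. -/
noncomputable def dL (d σ δ : ℝ) : ℝ :=
  Real.sqrt (d ^ 2 - 4 * d * Real.sin δ * Real.cos σ + 4 * Real.sin δ ^ 2)

/-- Distance between the centers of the two right disks, in `(σ, δ)` coordinates. -/
noncomputable def dR (d σ δ : ℝ) : ℝ :=
  Real.sqrt (d ^ 2 + 4 * d * Real.sin δ * Real.cos σ + 4 * Real.sin δ ^ 2)

/-- Length of the LRL-type bounded-curvature path. -/
noncomputable def Lfun (d σ δ : ℝ) : ℝ :=
  2 * π - 4 * Real.arcsin (dL d σ δ / 4) + 2 * δ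

/-- Length of the RLR-type bounded-curvature path. -/
noncomputable def Rfun (d σ δ : ℝ) : ℝ :=
  4 * π - 4 * Real.arcsin (dR d σ δ / 4) - 2 * δ

/-- Minimum of the LRL- and RLR-path lengths. -/
noncomputable def Cfun (d σ δ : ℝ) : ℝ :=
  min (Lfun d σ δ) (Rfun d σ δ)

/-- The supremum of `Cfun` over the rectangle `Ξ(d) = [0, π] × [α*, π - α*]`,
where `α* = arcsin (d/2)`. -/
noncomputable def Afun (d : ℝ) : ℝ :=
  sSup ((fun p : ℝ × ℝ => Cfun d p.1 p.2) ''
    (Set.Icc 0 π ×ˢ Set.Icc (Real.arcsin (d / 2)) (π - Real.arcsin (d / 2))))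

/-!
`dL` is the third side of a triangle with sides `d` and `2 sin δ` enclosing the angle `σ`, and
`dR` is obtained from it by `σ ↦ π - σ`. Since `sin (π - δ) = sin δ`, the half-turn
`(σ, δ) ↦ (π - σ, π - δ)` of the rectangle exchanges `L` and `R`, so only `L` has to be studied.

Opening the angle `σ` lengthens the third side, which is the monotonicity in `σ`. For the
monotonicity in `δ`, the projection `|2 sin δ - d cos σ|` of the third side is at most `dL`, whence
`|∂dL/∂δ| ≤ 2 |cos δ|`; and `d < 2 sin δ` gives `dL < 4 sin δ` by the triangle inequality, so that
`|cos δ| < √(1 - (dL / 4)²)`. Therefore `∂L/∂δ = 2 - (∂dL/∂δ) / √(1 - (dL / 4)²) > 0`.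
-/

theorem lt_sin_of_mem_Ioo_arcsin {x θ : ℝ} (hθ : θ ∈ Set.Ioo (arcsin x) (π - arcsin x)) :
    x < sin θ := by
  rcases le_total θ (π / 2) with h | h
  · exact (arcsin_lt_iff_lt_sin' ⟨(neg_pi_div_two_le_arcsin x).trans_lt hθ.1, h⟩).1 hθ.1
  · have hlt : arcsin x < π - θ := by linarith [hθ.2]
    rw [← sin_pi_sub]
    exact (arcsin_lt_iff_lt_sin'
      ⟨(neg_pi_div_two_le_arcsin x).trans_lt hlt, by linarith⟩).1 hlt

theorem sin_pos_of_mem_Icc_arcsin {x θ : ℝ} (hx : 0 < x)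
    (hθ : θ ∈ Set.Icc (arcsin x) (π - arcsin x)) : 0 < sin θ := by
  have := arcsin_pos.2 hx
  exact sin_pos_of_pos_of_lt_pi (by linarith [hθ.1]) (by linarith [hθ.2])

section Triangle

variable {d σ δ : ℝ}

theorem dL_radicand_eq (d σ δ : ℝ) :
    d ^ 2 - 4 * d * sin δ * cos σ + 4 * sin δ ^ 2 =
      (2 * sin δ - d * cos σ) ^ 2 + (d * sin σ) ^ 2 := by
  linear_combination -d ^ 2 * sin_sq_add_cos_sq σ

theorem dL_nonneg (d σ δ : ℝ) : 0 ≤ dL d σ δ :=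
  sqrt_nonneg _

theorem abs_two_mul_sin_sub_le_dL (d σ δ : ℝ) : |2 * sin δ - d * cos σ| ≤ dL d σ δ := by
  refine abs_le_sqrt ?_
  rw [dL_radicand_eq]
  exact le_add_of_nonneg_right (sq_nonneg _)

theorem two_mul_sin_sub_le_dL (hd : 0 ≤ d) : 2 * sin δ - d ≤ dL d σ δ :=
  calc 2 * sin δ - d ≤ 2 * sin δ - d * cos σ := by
        linarith [mul_le_of_le_one_right hd (cos_le_one σ)]
    _ ≤ |2 * sin δ - d * cos σ| := le_abs_self _
    _ ≤ dL d σ δ := abs_two_mul_sin_sub_le_dL d σ δ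

theorem dL_le_add_two_mul_sin (hd : 0 ≤ d) (hδ : 0 ≤ sin δ) : dL d σ δ ≤ d + 2 * sin δ := by
  refine sqrt_le_iff.2 ⟨by positivity, ?_⟩
  nlinarith [mul_nonneg (mul_nonneg hd hδ) (by linarith [neg_one_le_cos σ] : 0 ≤ 1 + cos σ)]

theorem dL_pos (hd : 0 ≤ d) (h : d < 2 * sin δ) : 0 < dL d σ δ :=
  (sub_pos.2 h).trans_le (two_mul_sin_sub_le_dL hd)

theorem dL_lt_four_mul_sin (hd : 0 ≤ d) (h : d < 2 * sin δ) : dL d σ δ < 4 * sin δ := by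
  linarith [dL_le_add_two_mul_sin (σ := σ) hd (by linarith : 0 ≤ sin δ)]

theorem strictMonoOn_dL_sigma (hd : 0 < d) (hδ : 0 < sin δ) :
    StrictMonoOn (fun σ => dL d σ δ) (Set.Icc 0 π) := by
  intro σ hσ τ hτ hlt
  refine sqrt_lt_sqrt (by rw [dL_radicand_eq]; positivity) ?_
  linarith [mul_lt_mul_of_pos_left (strictAntiOn_cos hσ hτ hlt) (mul_pos hd hδ)]

end Triangle

section Derivative

variable {d σ δ : ℝ}

theorem hasDerivAt_dL (h : dL d σ δ ≠ 0) :
    HasDerivAt (dL d σ) (2 * cos δ * (2 * sin δ - d * cos σ) / dL d σ δ) δ := by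
  have hsin := hasDerivAt_sin δ
  have hradicand := (((hsin.const_mul (4 * d)).mul_const (cos σ)).const_sub (d ^ 2)).add
    ((hsin.pow 2).const_mul 4)
  refine (hradicand.sqrt fun h0 => h (sqrt_eq_zero'.2 h0.le)).congr_deriv ?_
  change _ / (2 * dL d σ δ) = _
  field_simp
  ring

theorem abs_deriv_dL_le (h : dL d σ δ ≠ 0) : |deriv (dL d σ) δ| ≤ 2 * |cos δ| := by
  have hpos : 0 < dL d σ δ := (dL_nonneg d σ δ).lt_of_ne' h
  rw [(hasDerivAt_dL h).deriv, abs_div, abs_of_pos hpos, div_le_iff₀ hpos, abs_mul, abs_mul,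
    abs_two]
  gcongr
  exact abs_two_mul_sin_sub_le_dL d σ δ

theorem abs_cos_lt_sqrt_one_sub_dL_sq (hd : 0 ≤ d) (h : d < 2 * sin δ) :
    |cos δ| < √(1 - (dL d σ δ / 4) ^ 2) := by
  have hlt : dL d σ δ / 4 < sin δ := by linarith [dL_lt_four_mul_sin (σ := σ) hd h]
  have hnonneg : 0 ≤ dL d σ δ / 4 := div_nonneg (dL_nonneg d σ δ) (by norm_num)
  rw [abs_cos_eq_sqrt_one_sub_sin_sq]
  refine sqrt_lt_sqrt (sub_nonneg.2 (sin_sq_le_one δ)) ?_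
  gcongr

theorem hasDerivAt_Lfun_delta (h0 : dL d σ δ ≠ 0) (h4 : dL d σ δ < 4) :
    HasDerivAt (Lfun d σ) (2 - deriv (dL d σ) δ / √(1 - (dL d σ δ / 4) ^ 2)) δ := by
  have hdL := (hasDerivAt_dL h0).differentiableAt.hasDerivAt.div_const 4
  have harcsin := (hasDerivAt_arcsin (x := dL d σ δ / 4)
    (by linarith [dL_nonneg d σ δ]) (by linarith)).comp δ hdL
  refine (((harcsin.const_mul 4).const_sub (2 * π)).add
    ((hasDerivAt_id δ).const_mul 2)).congr_deriv ?_
  ring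

theorem deriv_Lfun_delta_pos (hd : 0 ≤ d) (h : d < 2 * sin δ) : 0 < deriv (Lfun d σ) δ := by
  have hne : dL d σ δ ≠ 0 := (dL_pos hd h).ne'
  have h4 : dL d σ δ < 4 := by
    linarith [dL_lt_four_mul_sin (σ := σ) hd h, sin_le_one δ]
  have hcos := abs_cos_lt_sqrt_one_sub_dL_sq (σ := σ) hd h
  rw [(hasDerivAt_Lfun_delta hne h4).deriv, sub_pos, div_lt_iff₀ ((abs_nonneg _).trans_lt hcos)]
  calc deriv (dL d σ) δ ≤ |deriv (dL d σ) δ| := le_abs_self _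
    _ ≤ 2 * |cos δ| := abs_deriv_dL_le hne
    _ < 2 * √(1 - (dL d σ δ / 4) ^ 2) := by gcongr

end Derivative

section Monotonicity

variable {d : ℝ}

theorem strictAntiOn_Lfun_sigma {δ : ℝ} (hd : 0 < d) (hδ : 0 < sin δ) (h : d + 2 * sin δ ≤ 4) :
    StrictAntiOn (fun σ => Lfun d σ δ) (Set.Icc 0 π) := by
  have hmem (σ : ℝ) : dL d σ δ / 4 ∈ Set.Icc (-1) 1 :=
    ⟨by linarith [dL_nonneg d σ δ], by linarith [dL_le_add_two_mul_sin (σ := σ) hd.le hδ.le]⟩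
  intro σ hσ τ hτ hlt
  have hdL : dL d σ δ / 4 < dL d τ δ / 4 :=
    div_lt_div_of_pos_right (strictMonoOn_dL_sigma hd hδ hσ hτ hlt) (by norm_num)
  have harcsin := strictMonoOn_arcsin (hmem σ) (hmem τ) hdL
  simp only [Lfun]
  linarith

theorem continuous_Lfun_delta (d σ : ℝ) : Continuous (Lfun d σ) := by
  unfold Lfun dL
  fun_prop

theorem strictMonoOn_Lfun_delta (hd : 0 ≤ d) (σ : ℝ) :
    StrictMonoOn (Lfun d σ) (Set.Icc (arcsin (d / 2)) (π - arcsin (d / 2))) := by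
  refine strictMonoOn_of_deriv_pos (convex_Icc _ _) (continuous_Lfun_delta d σ).continuousOn ?_
  intro δ hδ
  rw [interior_Icc] at hδ
  exact deriv_Lfun_delta_pos hd (by linarith [lt_sin_of_mem_Ioo_arcsin hδ])

theorem Rfun_eq_Lfun_pi_sub (d σ δ : ℝ) : Rfun d σ δ = Lfun d (π - σ) (π - δ) := by
  have hdist : dR d σ δ = dL d (π - σ) (π - δ) := by
    simp only [dR, dL, sin_pi_sub, cos_pi_sub, mul_neg, sub_neg_eq_add]
  rw [Rfun, Lfun, hdist]
  ring

theorem strictMonoOn_Rfun_sigma {δ : ℝ} (hd : 0 < d) (hδ : 0 < sin δ) (h : d + 2 * sin δ ≤ 4) :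
    StrictMonoOn (fun σ => Rfun d σ δ) (Set.Icc 0 π) := by
  intro σ hσ τ hτ hlt
  simp only [Rfun_eq_Lfun_pi_sub]
  rw [← sin_pi_sub] at hδ h
  exact strictAntiOn_Lfun_sigma hd hδ h ⟨by linarith [hτ.2], by linarith [hτ.1]⟩
    ⟨by linarith [hσ.2], by linarith [hσ.1]⟩ (sub_lt_sub_left hlt π)

theorem strictAntiOn_Rfun_delta (hd : 0 ≤ d) (σ : ℝ) :
    StrictAntiOn (Rfun d σ) (Set.Icc (arcsin (d / 2)) (π - arcsin (d / 2))) := by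
  intro δ hδ ε hε hlt
  simp only [Rfun_eq_Lfun_pi_sub]
  exact strictMonoOn_Lfun_delta hd (π - σ) ⟨by linarith [hε.2], by linarith [hε.1]⟩
    ⟨by linarith [hδ.2], by linarith [hδ.1]⟩ (sub_lt_sub_left hlt π)

end Monotonicity

/-- Let `0 < d < 2` and `α* = arcsin (d/2)`.  On the rectangle
`Ξ = [0, π] × [α*, π - α*]`: for fixed `δ`, `σ ↦ L` is strictly decreasing and
`σ ↦ R` is strictly increasing on `[0, π]`; for fixed `σ`, `δ ↦ L` is strictly
increasing and `δ ↦ R` is strictly decreasing on `[α*, π - α*]`. -/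
theorem L_R_monotone (d : ℝ) (hd0 : 0 < d) (hd2 : d < 2) :
    (∀ δ ∈ Set.Icc (Real.arcsin (d / 2)) (π - Real.arcsin (d / 2)),
      StrictAntiOn (fun σ => Lfun d σ δ) (Set.Icc 0 π) ∧
      StrictMonoOn (fun σ => Rfun d σ δ) (Set.Icc 0 π)) ∧
    (∀ σ ∈ Set.Icc (0:ℝ) π,
      StrictMonoOn (fun δ => Lfun d σ δ)
        (Set.Icc (Real.arcsin (d / 2)) (π - Real.arcsin (d / 2))) ∧
      StrictAntiOn (fun δ => Rfun d σ δ)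
        (Set.Icc (Real.arcsin (d / 2)) (π - Real.arcsin (d / 2)))) := by
  refine ⟨fun δ hδ => ?_, fun σ _ =>
    ⟨strictMonoOn_Lfun_delta hd0.le σ, strictAntiOn_Rfun_delta hd0.le σ⟩⟩
  have hsin : 0 < sin δ := sin_pos_of_mem_Icc_arcsin (half_pos hd0) hδ
  have hsum : d + 2 * sin δ ≤ 4 := by linarith [sin_le_one δ]
  exact ⟨strictAntiOn_Lfun_sigma hd0 hsin hsum, strictMonoOn_Rfun_sigma hd0 hsin hsum⟩
end

section
/- For 0 < d < √2, with α* = arcsin(d/2), Ξ(d) = [0,π] × [α*, π−α*], and A(d) = sup{ min(L(d,σ,δ), R(d,σ,δ)) : (σ,δ) ∈ Ξ(d) }, one has A(d) > 2π + 2·arcsin(d/2). -/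
open Real

/-!
Write `d = 2 sin α` and stay on the edge `σ = 0`, where `d_L = 2 |sin δ - sin α|` and
`d_R = 2 |sin δ + sin α|`. Factoring the difference of sines shows that `arcsin (d_L / 4)` lies
strictly below `(δ - α) / 2`, and `α ↦ -α` turns this into the bound `(δ + α) / 2` for
`arcsin (d_R / 4)`. Hence `L > 2π + 2α` for every `δ > α`, while `R > 4π - 4δ - 2α`. The latter
bound also equals `2π + 2α` at `δ = π / 2 - α`, and this `δ` exceeds `α` because `d < √2` means
`α < π / 4`.
-/

theorem abs_cos_lt_one_of_mem_Ioo {x : ℝ} (hx : x ∈ Set.Ioo 0 π) : |cos x| < 1 := by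
  rw [← sq_lt_one_iff_abs_lt_one, cos_sq']
  exact sub_lt_self 1 (pow_pos (sin_pos_of_mem_Ioo hx) 2)

theorem abs_sin_sub_sin_lt_two_mul_sin {x y : ℝ} (hxy : |x| < y) (hy : y ≤ π) :
    |sin y - sin x| < 2 * sin ((y - x) / 2) := by
  obtain ⟨hneg, hlt⟩ := abs_lt.1 hxy
  have hsin : 0 < sin ((y - x) / 2) :=
    sin_pos_of_pos_of_lt_pi (by linarith) (by linarith)
  have hcos : |cos ((y + x) / 2)| < 1 :=
    abs_cos_lt_one_of_mem_Ioo ⟨by linarith, by linarith⟩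
  rw [sin_sub_sin, abs_mul, abs_of_pos (by positivity)]
  exact mul_lt_of_lt_one_right (by positivity) hcos

theorem arcsin_lt_of_lt_sin {x y : ℝ} (hy : 0 < y) (hxy : x < sin y) : arcsin x < y := by
  rcases le_or_gt y (π / 2) with hle | hgt
  · exact (arcsin_lt_iff_lt_sin' ⟨by linarith [pi_pos], hle⟩).2 hxy
  · exact (arcsin_le_pi_div_two x).trans_lt hgt

theorem dL_zero (d δ : ℝ) : dL d 0 δ = |2 * sin δ - d| := by
  rw [dL, cos_zero, ← sqrt_sq_eq_abs]
  ring_nf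

theorem dL_neg (d σ δ : ℝ) : dL (-d) σ δ = dR d σ δ := by
  rw [dL, dR]
  ring_nf

section Edge

variable {α δ : ℝ}

theorem arcsin_dL_zero_lt (hαδ : |α| < δ) (hδ : δ ≤ π) :
    arcsin (dL (2 * sin α) 0 δ / 4) < (δ - α) / 2 := by
  apply arcsin_lt_of_lt_sin (by linarith [le_abs_self α])
  calc dL (2 * sin α) 0 δ / 4 = |sin δ - sin α| / 2 := by
        rw [dL_zero, ← mul_sub, abs_mul, abs_two]
        ring
    _ < sin ((δ - α) / 2) := by linarith [abs_sin_sub_sin_lt_two_mul_sin hαδ hδ]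

theorem arcsin_dR_zero_lt (hαδ : |α| < δ) (hδ : δ ≤ π) :
    arcsin (dR (2 * sin α) 0 δ / 4) < (δ + α) / 2 := by
  have h := arcsin_dL_zero_lt (α := -α) (by rwa [abs_neg]) hδ
  rwa [sin_neg, mul_neg, dL_neg, sub_neg_eq_add] at h

theorem lt_Lfun_zero (hαδ : |α| < δ) (hδ : δ ≤ π) : 2 * π + 2 * α < Lfun (2 * sin α) 0 δ := by
  rw [Lfun]
  linarith [arcsin_dL_zero_lt hαδ hδ]

theorem lt_Rfun_zero (hαδ : |α| < δ) (hδ : δ ≤ π) :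
    4 * π - 4 * δ - 2 * α < Rfun (2 * sin α) 0 δ := by
  rw [Rfun]
  linarith [arcsin_dR_zero_lt hαδ hδ]

theorem lt_Cfun_zero_pi_div_two_sub (hα : -(π / 2) ≤ α) (hα' : α < π / 4) :
    2 * π + 2 * α < Cfun (2 * sin α) 0 (π / 2 - α) := by
  have habs : |α| < π / 2 - α := abs_lt.2 ⟨by linarith [pi_pos], by linarith⟩
  have hle : π / 2 - α ≤ π := by linarith
  exact lt_min (lt_Lfun_zero habs hle) (by linarith [lt_Rfun_zero habs hle])

end Edge

theorem Cfun_le_three_mul_pi (d σ δ : ℝ) : Cfun d σ δ ≤ 3 * π := by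
  have hL : 0 ≤ arcsin (dL d σ δ / 4) := arcsin_nonneg.2 (div_nonneg (sqrt_nonneg _) (by norm_num))
  have hR : 0 ≤ arcsin (dR d σ δ / 4) := arcsin_nonneg.2 (div_nonneg (sqrt_nonneg _) (by norm_num))
  have hsum : Lfun d σ δ + Rfun d σ δ ≤ 3 * π + 3 * π := by
    rw [Lfun, Rfun]
    linarith
  rw [Cfun, min_le_iff]
  exact le_or_le_of_add_le_add hsum

theorem Cfun_le_Afun {d σ δ : ℝ} (hσ : σ ∈ Set.Icc 0 π)
    (hδ : δ ∈ Set.Icc (arcsin (d / 2)) (π - arcsin (d / 2))) : Cfun d σ δ ≤ Afun d := by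
  refine le_csSup ⟨3 * π, ?_⟩ ⟨(σ, δ), ⟨hσ, hδ⟩, rfl⟩
  rintro _ ⟨p, -, rfl⟩
  exact Cfun_le_three_mul_pi d p.1 p.2

theorem arcsin_half_lt_pi_div_four {d : ℝ} (hd : d < √2) : arcsin (d / 2) < π / 4 := by
  apply arcsin_lt_of_lt_sin (by positivity)
  rw [sin_pi_div_four]
  gcongr

/-- For `0 < d < √2`, one has `A(d) > 2π + 2·arcsin (d/2)`. -/
theorem A_lower_bound (d : ℝ) (hd0 : 0 < d) (hd2 : d < Real.sqrt 2) :
    2 * π + 2 * Real.arcsin (d / 2) < Afun d := by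
  have hα : arcsin (d / 2) < π / 4 := arcsin_half_lt_pi_div_four hd2
  have hd : 2 * sin (arcsin (d / 2)) = d := by
    have hd_le : d ≤ 2 := hd2.le.trans (sqrt_le_iff.2 ⟨by norm_num, by norm_num⟩)
    rw [sin_arcsin (by linarith) (by linarith)]
    ring
  have hC := lt_Cfun_zero_pi_div_two_sub (neg_pi_div_two_le_arcsin (d / 2)) hα
  rw [hd] at hC
  exact hC.trans_le (Cfun_le_Afun ⟨le_rfl, pi_pos.le⟩ ⟨by linarith, by linarith [pi_pos]⟩)
end
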